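/- If ν is a place of L with ν(y − a) > 0, then ν(x − a) = 1 and ν(y − a) = m; that is, the place Q of L given by a zero of y − a is unramified over the place P_{x−a} of K(x) and has ramification index m = q + 1 over the place P_{y−a} of K(y). -/

import Mathlib

open Polynomial

section RamAux

variable {K : Type*} [Field K] {L : Type*} [Field L]

theorem ram_natCast_add {v w : WithTop ℤ} {i j : ℤ} (h : (i : WithTop ℤ) ≤ v)
    (h' : (j : WithTop ℤ) ≤ w) : ((i + j : ℤ) : WithTop ℤ) ≤ v + w := by
  rw [WithTop.coe_add]; exact add_le_add h h'

theorem ram_pow_ge (ν : AddValuation L (WithTop ℤ)) {z : L} {i : ℤ}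
    (h : (i : WithTop ℤ) ≤ ν z) (k : ℕ) : ((k * i : ℤ) : WithTop ℤ) ≤ ν (z ^ k) := by
  induction k with
  | zero => simp
  | succ k ih =>
    rw [pow_succ, ν.map_mul]
    have := ram_natCast_add ih h
    convert this using 2
    push_cast; ring

theorem ram_pow_eq (ν : AddValuation L (WithTop ℤ)) {z : L} {i : ℤ}
    (h : ν z = (i : WithTop ℤ)) (k : ℕ) : ν (z ^ k) = ((k * i : ℤ) : WithTop ℤ) := by
  induction k with
  | zero => simp
  | succ k ih =>
    rw [pow_succ, ν.map_mul, ih, h, ← WithTop.coe_add]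
    congr 1
    push_cast; ring

theorem ram_C_nonneg (ν : AddValuation L (WithTop ℤ)) (φ : K[X] →+* L)
    (htriv : ∀ c : K, c ≠ 0 → ν (φ (C c)) = 0) (c : K) : ((0 : ℤ) : WithTop ℤ) ≤ ν (φ (C c)) := by
  by_cases hc : c = 0
  · simp [hc]
  · rw [htriv c hc]; simp

/-- Lower bound of the value of a polynomial. -/
theorem ram_poly_ge (ν : AddValuation L (WithTop ℤ)) (φ : K[X] →+* L)
    (htriv : ∀ c : K, c ≠ 0 → ν (φ (C c)) = 0) (a : K) (s r : ℤ)
    (hs : (s : WithTop ℤ) ≤ ν (φ (X - C a))) (P : K[X])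
    (hr : ∀ i : ℕ, i ≤ P.natDegree → r ≤ i * s) :
    (r : WithTop ℤ) ≤ ν (φ P) := by
  rw [← sum_taylor_eq P a, Polynomial.sum, map_sum]
  apply ν.map_le_sum
  intro i hi
  have hi' : i ≤ P.natDegree := by
    have := le_natDegree_of_mem_supp _ hi
    rwa [natDegree_taylor] at this
  rw [map_mul, map_pow, ν.map_mul]
  have h1 := ram_natCast_add (ram_C_nonneg ν φ htriv ((taylor a P).coeff i)) (ram_pow_ge ν hs i)
  refine le_trans ?_ h1
  rw [WithTop.coe_le_coe]
  have := hr i hi'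
  lia

theorem ram_unit (ν : AddValuation L (WithTop ℤ)) (φ : K[X] →+* L)
    (htriv : ∀ c : K, c ≠ 0 → ν (φ (C c)) = 0) (a : K) (s : ℤ) (hs0 : 0 < s)
    (hs : ν (φ (X - C a)) = (s : WithTop ℤ)) (P : K[X]) (hP : P.eval a ≠ 0) :
    ν (φ P) = 0 := by
  obtain ⟨Q, hQ⟩ := X_sub_C_dvd_sub_C_eval (a := a) (p := P)
  have h1 : P = C (P.eval a) + (X - C a) * Q := by rw [← hQ]; ring
  have h2 : ((0 : ℤ) : WithTop ℤ) ≤ ν (φ Q) :=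
    ram_poly_ge ν φ htriv a s 0 hs.ge Q (fun i _ => by positivity)
  have h3 : ν (φ (C (P.eval a))) < ν (φ ((X - C a) * Q)) := by
    rw [htriv _ hP, map_mul, ν.map_mul]
    have := ram_natCast_add hs.ge h2
    refine lt_of_lt_of_le ?_ this
    exact_mod_cast (by lia : (0:ℤ) < s + 0)
  rw [h1, map_add, ν.map_add_eq_of_lt_left h3, htriv _ hP]

/-- Elements approximated arbitrarily well by polynomials. -/
def RamApprox (ν : AddValuation L (WithTop ℤ)) (φ : K[X] →+* L) (z : L) : Prop :=
  ∀ N : ℕ, ∃ P : K[X], ((N : ℤ) : WithTop ℤ) ≤ ν (z - φ P)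

theorem RamApprox.poly (ν : AddValuation L (WithTop ℤ)) (φ : K[X] →+* L) (P : K[X]) :
    RamApprox ν φ (φ P) := fun N => ⟨P, by simp⟩

theorem RamApprox.add {ν : AddValuation L (WithTop ℤ)} {φ : K[X] →+* L} {z w : L}
    (hz : RamApprox ν φ z) (hw : RamApprox ν φ w) : RamApprox ν φ (z + w) := by
  intro N
  obtain ⟨P, hP⟩ := hz N
  obtain ⟨Q, hQ⟩ := hw N
  refine ⟨P + Q, ?_⟩
  have : z + w - φ (P + Q) = (z - φ P) + (w - φ Q) := by rw [map_add]; ring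
  rw [this]
  exact ν.map_le_add hP hQ

theorem RamApprox.nonneg {ν : AddValuation L (WithTop ℤ)} {φ : K[X] →+* L}
    (hpos : ∀ P, ((0 : ℤ) : WithTop ℤ) ≤ ν (φ P)) {z : L}
    (hz : RamApprox ν φ z) : ((0 : ℤ) : WithTop ℤ) ≤ ν z := by
  obtain ⟨P, hP⟩ := hz 0
  have := ν.map_le_add hP (hpos P)
  simpa using this

theorem RamApprox.mul {ν : AddValuation L (WithTop ℤ)} {φ : K[X] →+* L}
    (hpos : ∀ P, ((0 : ℤ) : WithTop ℤ) ≤ ν (φ P)) {z w : L}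
    (hz : RamApprox ν φ z) (hw : RamApprox ν φ w) : RamApprox ν φ (z * w) := by
  intro N
  obtain ⟨P, hP⟩ := hz N
  obtain ⟨Q, hQ⟩ := hw N
  refine ⟨P * Q, ?_⟩
  have : z * w - φ (P * Q) = z * (w - φ Q) + φ Q * (z - φ P) := by rw [map_mul]; ring
  rw [this]
  apply ν.map_le_add
  · rw [ν.map_mul]
    have := ram_natCast_add (hz.nonneg hpos) hQ
    simpa using this
  · rw [ν.map_mul]
    have := ram_natCast_add (hpos Q) hP
    simpa using this

theorem RamApprox.inv {ν : AddValuation L (WithTop ℤ)} {φ : K[X] →+* L}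
    (htriv : ∀ c : K, c ≠ 0 → ν (φ (C c)) = 0) (a : K) (s : ℤ) (hs0 : 0 < s)
    (hs : ν (φ (X - C a)) = (s : WithTop ℤ)) (g : K[X]) (hg : g.eval a ≠ 0) :
    RamApprox ν φ (φ g)⁻¹ := by
  intro N
  have hpos : ∀ P, ((0 : ℤ) : WithTop ℤ) ≤ ν (φ P) := fun P =>
    ram_poly_ge ν φ htriv a s 0 hs.ge P (fun i _ => by positivity)
  have hcop : IsCoprime g ((X - C a) ^ N) := by
    apply IsCoprime.pow_right
    refine ((irreducible_X_sub_C a).coprime_iff_not_dvd.2 ?_).symm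
    rw [dvd_iff_isRoot]; exact hg
  obtain ⟨A, B, hAB⟩ := hcop
  have hg0 := ram_unit ν φ htriv a s hs0 hs g hg
  have hgne : φ g ≠ 0 := by
    intro h; rw [h, ν.map_zero] at hg0; exact absurd hg0 (by simp)
  refine ⟨A, ?_⟩
  have h1 : φ A * φ g + φ B * φ (X - C a) ^ N = 1 := by
    rw [← map_pow, ← map_mul, ← map_mul, ← map_add, hAB, map_one]
  have h2 : ((φ g)⁻¹ - φ A) * φ g = φ B * φ (X - C a) ^ N := by
    rw [sub_mul, inv_mul_cancel₀ hgne, ← h1]; ring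
  have h3 : ν ((φ g)⁻¹ - φ A) = ν (φ B * φ (X - C a) ^ N) := by
    rw [← h2, ν.map_mul, hg0, add_zero]
  rw [h3, ν.map_mul]
  have := ram_natCast_add (hpos B) (ram_pow_ge ν hs.ge N)
  refine le_trans ?_ this
  rw [WithTop.coe_le_coe]
  nlinarith [Int.natCast_nonneg N]

theorem ram_pow_sub (ν : AddValuation L (WithTop ℤ)) {u v : L} {N : ℤ}
    (hu : ((0 : ℤ) : WithTop ℤ) ≤ ν u) (hv : ((0 : ℤ) : WithTop ℤ) ≤ ν v)
    (h : (N : WithTop ℤ) ≤ ν (u - v)) (k : ℕ) : (N : WithTop ℤ) ≤ ν (u ^ k - v ^ k) := by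
  induction k with
  | zero => simp
  | succ k ih =>
    have : u ^ (k + 1) - v ^ (k + 1) = u * (u ^ k - v ^ k) + (u - v) * v ^ k := by ring
    rw [this]
    apply ν.map_le_add
    · rw [ν.map_mul]; simpa using ram_natCast_add hu ih
    · rw [ν.map_mul]; simpa using ram_natCast_add h (ram_pow_ge ν hv k)

theorem ram_pow_sub_succ (ν : AddValuation L (WithTop ℤ)) {u v : L} {N : ℤ}
    (hu : ((1 : ℤ) : WithTop ℤ) ≤ ν u) (hv : ((1 : ℤ) : WithTop ℤ) ≤ ν v)
    (h : (N : WithTop ℤ) ≤ ν (u - v)) (k : ℕ) (hk : 1 ≤ k) :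
    ((N + 1 : ℤ) : WithTop ℤ) ≤ ν (u ^ (k + 1) - v ^ (k + 1)) := by
  have h01 : ((0 : ℤ) : WithTop ℤ) ≤ ((1 : ℤ) : WithTop ℤ) := by
    rw [WithTop.coe_le_coe]; norm_num
  have : u ^ (k + 1) - v ^ (k + 1) = u * (u ^ k - v ^ k) + (u - v) * v ^ k := by ring
  rw [this]
  apply ν.map_le_add
  · rw [ν.map_mul, add_comm N 1]
    exact ram_natCast_add hu (ram_pow_sub ν (h01.trans hu) (h01.trans hv) h k)
  · rw [ν.map_mul]
    refine ram_natCast_add h (le_trans ?_ (ram_pow_ge ν hv k))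
    rw [WithTop.coe_le_coe]
    lia

theorem RamApprox.root {ν : AddValuation L (WithTop ℤ)} {φ : K[X] →+* L}
    (htriv : ∀ c : K, c ≠ 0 → ν (φ (C c)) = 0) (b : K) (hb : b ≠ 0) (u w : L) (k : ℕ) (hk : 1 ≤ k)
    (hu : ((1 : ℤ) : WithTop ℤ) ≤ ν u) (hw : RamApprox ν φ w)
    (h : u ^ (k + 1) + φ (C b) * u = w) : RamApprox ν φ u := by
  have key : ∀ N : ℕ, ∃ P : K[X], ((N + 1 : ℤ) : WithTop ℤ) ≤ ν (u - φ P) := by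
    intro N
    induction N with
    | zero => exact ⟨0, by simpa using hu⟩
    | succ N ih =>
      obtain ⟨P, hP⟩ := ih
      obtain ⟨W, hW⟩ := hw (N + 2)
      have hP1 : ((1 : ℤ) : WithTop ℤ) ≤ ν (φ P) := by
        have h1 : ((1 : ℤ) : WithTop ℤ) ≤ ν (u - φ P) := by
          refine le_trans ?_ hP
          rw [WithTop.coe_le_coe]; lia
        have := ν.map_le_sub hu h1
        simpa using this
      refine ⟨C b⁻¹ * (W - P ^ (k + 1)), ?_⟩
      have hbb : φ (C b⁻¹) * φ (C b) = 1 := by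
        rw [← map_mul, ← C_mul, inv_mul_cancel₀ hb, C_1, map_one]
      have e : u - φ (C b⁻¹ * (W - P ^ (k + 1))) =
          φ (C b⁻¹) * ((w - φ W) - (u ^ (k + 1) - φ P ^ (k + 1))) := by
        rw [map_mul, map_sub, map_pow, ← h]
        linear_combination (-u) * hbb
      rw [e, ν.map_mul, htriv _ (inv_ne_zero hb), zero_add]
      apply ν.map_le_sub
      · refine le_trans ?_ hW
        rw [WithTop.coe_le_coe]; push_cast; lia
      · refine le_trans ?_ (ram_pow_sub_succ ν hu hP1 hP k hk)
        rw [WithTop.coe_le_coe]; push_cast; lia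
  intro N
  obtain ⟨P, hP⟩ := key N
  refine ⟨P, le_trans ?_ hP⟩
  rw [WithTop.coe_le_coe]; lia

theorem RamApprox.dvd {ν : AddValuation L (WithTop ℤ)} {φ : K[X] →+* L}
    (htriv : ∀ c : K, c ≠ 0 → ν (φ (C c)) = 0) (a : K) (s : ℤ) (hs0 : 0 < s)
    (hs : ν (φ (X - C a)) = (s : WithTop ℤ)) (z : L) (hz : RamApprox ν φ z) (i : ℤ)
    (hi : ν z = (i : WithTop ℤ)) : s ∣ i := by
  obtain ⟨P, hP⟩ := hz (i.toNat + 1)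
  have hlt : ν z < ν (z - φ P) := by
    rw [hi]
    refine lt_of_lt_of_le ?_ hP
    rw [WithTop.coe_lt_coe]
    lia
  have hPi : ν (φ P) = (i : WithTop ℤ) := by
    rw [← hi]
    have := ν.map_sub_eq_of_lt_right hlt
    simpa using this
  have hP0 : P ≠ 0 := by
    rintro rfl
    rw [map_zero, ν.map_zero] at hPi
    exact absurd hPi (by simp)
  obtain ⟨R, hR, hR'⟩ := exists_eq_pow_rootMultiplicity_mul_and_not_dvd P hP0 a
  rw [dvd_iff_isRoot] at hR'
  rw [hR, map_mul, ν.map_mul, ram_unit ν φ htriv a s hs0 hs R hR', add_zero, map_pow,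
    ram_pow_eq ν hs, WithTop.coe_inj] at hPi
  exact ⟨_, by rw [← hPi, mul_comm]⟩

end RamAux

/-- If ν(y − a) > 0 then ν(x − a) = 1 and ν(y − a) = m: the zero Q of
y − a is unramified over P_{x−a} and totally ramified (index m = q + 1) over P_{y−a}. -/
theorem ramification_at_Q
    (K : Type*) [Field K] [IsAlgClosed K] (p : ℕ) (hp : p.Prime) [CharP K p]
    (n : ℕ) (hn : 1 ≤ n) (q m : ℕ) (hq : q = p ^ n) (hm : m = q + 1)
    (a b : K) (hb : b ≠ 0)
    (g : Polynomial K) (hga : g.eval a ≠ 0) (hgdeg : g.natDegree < m)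
    (hgcd : Nat.gcd (m - g.natDegree) m = 1)
    (L : Type*) [Field L] [Algebra (RatFunc K) L]
    (hdeg : Module.finrank (RatFunc K) L = m)
    (y : L) (hgen : Algebra.adjoin (RatFunc K) {y} = ⊤)
    (heq : (y - algebraMap (RatFunc K) L (RatFunc.C a)) ^ m
        + algebraMap (RatFunc K) L (RatFunc.C b) * (y - algebraMap (RatFunc K) L (RatFunc.C a))
        = algebraMap (RatFunc K) L
            ((RatFunc.X - RatFunc.C a) ^ m / algebraMap (Polynomial K) (RatFunc K) g))
    (ν : AddValuation L (WithTop ℤ)) (hsurj : Function.Surjective ν)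
    (htriv : ∀ c : K, c ≠ 0 → ν (algebraMap (RatFunc K) L (RatFunc.C c)) = 0)
    (hy : 0 < ν (y - algebraMap (RatFunc K) L (RatFunc.C a))) :
    ν (algebraMap (RatFunc K) L (RatFunc.X - RatFunc.C a)) = ((1 : ℤ) : WithTop ℤ) ∧
      ν (y - algebraMap (RatFunc K) L (RatFunc.C a)) = ((m : ℤ) : WithTop ℤ) := by
  set φ : K[X] →+* L := (algebraMap (RatFunc K) L).comp (algebraMap K[X] (RatFunc K)) with hφ
  have hφinj : Function.Injective φ :=
    (algebraMap (RatFunc K) L).injective.comp (RatFunc.algebraMap_injective K)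
  have hC : ∀ c : K, algebraMap (RatFunc K) L (RatFunc.C c) = φ (C c) := fun c => by
    simp [hφ]
  have hX : algebraMap (RatFunc K) L (RatFunc.X - RatFunc.C a) = φ (X - C a) := by
    simp [hφ]
  have hrhs : algebraMap (RatFunc K) L
      ((RatFunc.X - RatFunc.C a) ^ m / algebraMap (Polynomial K) (RatFunc K) g)
      = φ (X - C a) ^ m * (φ g)⁻¹ := by
    rw [map_div₀, map_pow, hX, div_eq_mul_inv]; rfl
  rw [hrhs] at heq
  rw [hX]
  simp only [hC] at heq htriv hy ⊢
  set u := y - φ (C a) with hu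
  have hq1 : 1 ≤ q := by rw [hq]; exact Nat.one_le_pow _ _ hp.pos
  have hg0 : g ≠ 0 := by rintro rfl; simp at hga
  have hφg : φ g ≠ 0 := (map_ne_zero_iff φ hφinj).2 hg0
  have hφt : φ (X - C a) ≠ 0 := (map_ne_zero_iff φ hφinj).2 (X_sub_C_ne_zero a)
  have hu0 : u ≠ 0 := by
    intro h
    rw [h, zero_pow (by lia), mul_zero, add_zero] at heq
    exact mul_ne_zero (pow_ne_zero _ hφt) (inv_ne_zero hφg) heq.symm
  have hfin : ∀ z : L, z ≠ 0 → ∃ i : ℤ, ν z = (i : WithTop ℤ) := by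
    intro z hz
    have : ν z ≠ ⊤ := fun h => hz (ν.top_iff.1 h)
    exact ⟨_, (WithTop.coe_untop _ this).symm⟩
  obtain ⟨e, he⟩ := hfin u hu0
  obtain ⟨s, hs⟩ := hfin _ hφt
  obtain ⟨d, hd⟩ := hfin _ hφg
  have he0 : 0 < e := by rw [he] at hy; exact_mod_cast hy
  have hlhs : ν (u ^ m + φ (C b) * u) = (e : WithTop ℤ) := by
    have h1 : ν (φ (C b) * u) = (e : WithTop ℤ) := by rw [ν.map_mul, htriv b hb, he, zero_add]
    rw [ν.map_add_eq_of_lt_right, h1]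
    rw [h1, ram_pow_eq ν he, WithTop.coe_lt_coe, hm]
    push_cast
    have : (1 : ℤ) ≤ q := by exact_mod_cast hq1
    nlinarith
  have hmain : (m : ℤ) * s = e + d := by
    have h1 : (u ^ m + φ (C b) * u) * φ g = φ (X - C a) ^ m := by
      rw [heq, mul_assoc, inv_mul_cancel₀ hφg, mul_one]
    have h2 := congrArg ν h1
    rw [ν.map_mul, hlhs, hd, ram_pow_eq ν hs, ← WithTop.coe_add, WithTop.coe_inj] at h2
    exact h2.symm
  have hs0 : 0 < s := by
    by_contra hneg
    have hneg : s ≤ 0 := not_lt.1 hneg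
    have h1 := ram_poly_ge ν φ htriv a s (g.natDegree * s) hs.ge g (fun i hi => by
      have : (i : ℤ) ≤ g.natDegree := by exact_mod_cast hi
      nlinarith)
    rw [hd, WithTop.coe_le_coe] at h1
    have : (g.natDegree : ℤ) < m := by exact_mod_cast hgdeg
    nlinarith
  have hd0 : d = 0 := by
    have := ram_unit ν φ htriv a s hs0 hs g hga
    rw [hd] at this
    exact_mod_cast this
  have hpos : ∀ P, ((0 : ℤ) : WithTop ℤ) ≤ ν (φ P) := fun P =>
    ram_poly_ge ν φ htriv a s 0 hs.ge P (fun i _ => by positivity)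
  have hua : RamApprox ν φ u := by
    refine RamApprox.root htriv b hb u (φ (X - C a) ^ m * (φ g)⁻¹) q hq1 ?_ ?_ (by rw [← heq, hm])
    · rw [he, WithTop.coe_le_coe]; lia
    · rw [← map_pow]
      exact (RamApprox.poly ν φ _).mul hpos (RamApprox.inv htriv a s hs0 hs g hga)
  have hya : RamApprox ν φ y := by
    have := hua.add (RamApprox.poly ν φ (C a))
    rwa [hu, sub_add_cancel] at this
  have hfrac : ∀ z : L, ∃ D : K[X], D ≠ 0 ∧ RamApprox ν φ (z * φ D) := by
    intro z
    have hz : z ∈ Algebra.adjoin (RatFunc K) {y} := by rw [hgen]; trivial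
    induction hz using Algebra.adjoin_induction with
    | mem x hx =>
      rw [Set.mem_singleton_iff] at hx
      exact ⟨1, one_ne_zero, by rw [map_one, mul_one, hx]; exact hya⟩
    | algebraMap r =>
      refine ⟨r.denom, r.denom_ne_zero, ?_⟩
      have : algebraMap (RatFunc K) L r * φ r.denom = φ r.num := by
        have h0 : algebraMap K[X] (RatFunc K) r.denom ≠ 0 :=
          (map_ne_zero_iff _ (RatFunc.algebraMap_injective K)).2 r.denom_ne_zero
        have h1 : r * algebraMap K[X] (RatFunc K) r.denom = algebraMap K[X] (RatFunc K) r.num := by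
          conv_lhs => rw [← RatFunc.num_div_denom r]
          rw [RatFunc.num_div_denom r]
          exact ((div_eq_iff h0).1 (RatFunc.num_div_denom r)).symm
        rw [hφ, RingHom.comp_apply, RingHom.comp_apply, ← map_mul, h1]
      rw [this]
      exact RamApprox.poly ν φ _
    | add x z _ _ hx hz =>
      obtain ⟨D, hD, hx⟩ := hx
      obtain ⟨E, hE, hz⟩ := hz
      refine ⟨D * E, mul_ne_zero hD hE, ?_⟩
      have : (x + z) * φ (D * E) = x * φ D * φ E + z * φ E * φ D := by rw [map_mul]; ring
      rw [this]
      exact (hx.mul hpos (RamApprox.poly ν φ _)).add (hz.mul hpos (RamApprox.poly ν φ _))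
    | mul x z _ _ hx hz =>
      obtain ⟨D, hD, hx⟩ := hx
      obtain ⟨E, hE, hz⟩ := hz
      refine ⟨D * E, mul_ne_zero hD hE, ?_⟩
      have : (x * z) * φ (D * E) = (x * φ D) * (z * φ E) := by rw [map_mul]; ring
      rw [this]
      exact hx.mul hpos hz
  have hs1 : s = 1 := by
    obtain ⟨z, hz⟩ := hsurj ((1 : ℤ) : WithTop ℤ)
    obtain ⟨D, hD, hzD⟩ := hfrac z
    obtain ⟨δ, hδ⟩ := hfin (φ D) ((map_ne_zero_iff φ hφinj).2 hD)
    have h1 := RamApprox.dvd htriv a s hs0 hs _ (RamApprox.poly ν φ D) δ hδ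
    have h2 := RamApprox.dvd htriv a s hs0 hs _ hzD (1 + δ)
      (by rw [ν.map_mul, hz, hδ, WithTop.coe_add])
    have h3 : s ∣ 1 := (Int.dvd_add_left h1).1 h2
    exact Int.eq_one_of_dvd_one hs0.le h3
  refine ⟨by rw [hs, hs1], ?_⟩
  rw [he, WithTop.coe_inj]
  rw [hs1, hd0] at hmain
  lia
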